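/- For the Hopfield model with M fixed patterns, H_N(ξ,σ) = -N ∑_{μ=1}^M (m_N^μ(σ,ξ))² where m_N^μ(σ,ξ) = (1/N)∑_{i=1}^N ξ_i^μ σ_i, and for every fixed pattern realization ξ ∈ ({-1,1}^N)^M the free energy density is subadditive: N α_N(ξ) ≤ N_1 α_{N_1}(ξ) + N_2 α_{N_2}(ξ) for every decomposition N = N_1 + N_2; consequently, after averaging over i.i.d. symmetric Bernoulli patterns, the quenched free energy E[α_N] converges as N → ∞. -/

import Mathlib

open Finset Filter

noncomputable def spin (b : Bool) : ℝ := if b then 1 else -1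

/-- Overlap of the configuration `σ` with pattern `μ`. -/
noncomputable def overlap (M N : ℕ) (ξ : Fin M → Fin N → Bool) (σ : Fin N → Bool) (μ : Fin M) : ℝ :=
  (1 / (N : ℝ)) * ∑ i, spin (ξ μ i) * spin (σ i)

/-- Hopfield Hamiltonian with `M` patterns on `N` spins. -/
noncomputable def hamHop (M N : ℕ) (ξ : Fin M → Fin N → Bool) (σ : Fin N → Bool) : ℝ :=
  -(N : ℝ) * ∑ μ : Fin M, (overlap M N ξ σ μ) ^ 2

noncomputable def alphaHop (β : ℝ) (M N : ℕ) (ξ : Fin M → Fin N → Bool) : ℝ :=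
  (1 / (N : ℝ)) * Real.log (∑ σ : Fin N → Bool, Real.exp (-β * hamHop M N ξ σ))

/-!
Splitting `N₁ + N₂` sites into two blocks makes each overlap the convex combination, with weights
`Nᵢ / (N₁ + N₂)`, of the two block overlaps. Convexity of `x ↦ x ^ 2` then gives
`H_{N₁} + H_{N₂} ≤ H_{N₁ + N₂}`, and since the Boltzmann weights of the two blocks factorize,
`log Z_{N₁ + N₂} ≤ log Z_{N₁} + log Z_{N₂}`. The uniform average over patterns preserves this
inequality, and `H_N ≤ 0` forces `log Z_N ≥ 0`, so Fekete's lemma applies.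
-/

open scoped BigOperators

theorem add_mul_div_add_le_of_convexOn {𝕜 E : Type*} [Field 𝕜] [LinearOrder 𝕜]
    [IsStrictOrderedRing 𝕜] [AddCommMonoid E] [Module 𝕜 E] {s : Set E} {f : E → 𝕜}
    (hf : ConvexOn 𝕜 s f) {a b : 𝕜} (ha : 0 ≤ a) (hb : 0 ≤ b) {x y : E} (hx : x ∈ s)
    (hy : y ∈ s) :
    (a + b) * f ((a / (a + b)) • x + (b / (a + b)) • y) ≤ a * f x + b * f y := by
  obtain hab | hab := (add_nonneg ha hb).eq_or_lt
  · obtain ⟨rfl, rfl⟩ := (add_eq_zero_iff_of_nonneg ha hb).1 hab.symm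
    simp
  · have hjensen := (convexOn_iff_div.1 hf).2 hx hy ha hb hab
    calc (a + b) * f ((a / (a + b)) • x + (b / (a + b)) • y)
        ≤ (a + b) * ((a / (a + b)) • f x + (b / (a + b)) • f y) := by gcongr
      _ = a * f x + b * f y := by simp only [smul_eq_mul]; field_simp

section FiniteSums

variable {α β γ : Type*} [Fintype α] [Fintype β] [Fintype γ]

theorem sum_exp_pos [Nonempty α] (f : α → ℝ) : 0 < ∑ a, Real.exp (f a) :=
  sum_pos (fun _ _ => Real.exp_pos _) univ_nonempty

theorem le_log_sum_exp (f : α → ℝ) (a : α) : f a ≤ Real.log (∑ b, Real.exp (f b)) := by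
  have : Nonempty α := ⟨a⟩
  rw [Real.le_log_iff_exp_le (sum_exp_pos f)]
  exact single_le_sum (f := fun b => Real.exp (f b)) (fun _ _ => (Real.exp_pos _).le) (mem_univ a)

theorem log_sum_exp_le_add [Nonempty α] [Nonempty β] (e : γ ≃ α × β) {f : γ → ℝ} {g : α → ℝ}
    {h : β → ℝ} (hf : ∀ c, f c ≤ g (e c).1 + h (e c).2) :
    Real.log (∑ c, Real.exp (f c)) ≤
      Real.log (∑ a, Real.exp (g a)) + Real.log (∑ b, Real.exp (h b)) := by
  have : Nonempty γ := e.nonempty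
  rw [← Real.log_mul (sum_exp_pos g).ne' (sum_exp_pos h).ne']
  refine Real.log_le_log (sum_exp_pos f) ?_
  calc ∑ c, Real.exp (f c)
      ≤ ∑ c, Real.exp (g (e c).1) * Real.exp (h (e c).2) :=
        sum_le_sum fun c _ => by rw [← Real.exp_add]; exact Real.exp_le_exp.2 (hf c)
    _ = ∑ p : α × β, Real.exp (g p.1) * Real.exp (h p.2) :=
        e.sum_comp fun p => Real.exp (g p.1) * Real.exp (h p.2)
    _ = (∑ a, Real.exp (g a)) * ∑ b, Real.exp (h b) := by
        rw [Fintype.sum_prod_type, sum_mul_sum]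

theorem expect_le_expect_add_expect {K : Type*} [AddCommMonoid K] [PartialOrder K]
    [IsOrderedAddMonoid K] [Module ℚ≥0 K] [PosSMulMono ℚ≥0 K] [Nonempty α] [Nonempty β]
    (e : γ ≃ α × β) {f : γ → K} {g : α → K} {h : β → K}
    (hf : ∀ c, f c ≤ g (e c).1 + h (e c).2) :
    𝔼 c, f c ≤ 𝔼 a, g a + 𝔼 b, h b := by
  calc 𝔼 c, f c
      ≤ 𝔼 c, (g (e c).1 + h (e c).2) := expect_le_expect fun c _ => hf c
    _ = 𝔼 p : α × β, (g p.1 + h p.2) := Fintype.expect_equiv e _ _ fun _ => rfl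
    _ = 𝔼 a, g a + 𝔼 b, h b := by
        simp only [← univ_product_univ, expect_product, expect_add_distrib, Fintype.expect_const]

end FiniteSums

section Hamiltonian

variable {M N N₁ N₂ : ℕ}

theorem natCast_mul_overlap (ξ : Fin M → Fin N → Bool) (σ : Fin N → Bool) (μ : Fin M) :
    (N : ℝ) * overlap M N ξ σ μ = ∑ i, spin (ξ μ i) * spin (σ i) := by
  obtain rfl | hN := N.eq_zero_or_pos
  · simp
  · rw [overlap]
    field_simp

theorem overlap_add (ξ : Fin M → Fin (N₁ + N₂) → Bool) (σ : Fin (N₁ + N₂) → Bool) (μ : Fin M) :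
    overlap M (N₁ + N₂) ξ σ μ =
      (N₁ / (N₁ + N₂) : ℝ) *
          overlap M N₁ (fun ν i => ξ ν (Fin.castAdd N₂ i)) (fun i => σ (Fin.castAdd N₂ i)) μ +
        (N₂ / (N₁ + N₂) : ℝ) *
          overlap M N₂ (fun ν i => ξ ν (Fin.natAdd N₁ i)) (fun i => σ (Fin.natAdd N₁ i)) μ := by
  simp only [div_mul_eq_mul_div, natCast_mul_overlap]
  rw [← add_div, ← Nat.cast_add, overlap, Fin.sum_univ_add, one_div_mul_eq_div]

theorem hamHop_add_le (ξ : Fin M → Fin (N₁ + N₂) → Bool) (σ : Fin (N₁ + N₂) → Bool) :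
    hamHop M N₁ (fun μ i => ξ μ (Fin.castAdd N₂ i)) (fun i => σ (Fin.castAdd N₂ i)) +
        hamHop M N₂ (fun μ i => ξ μ (Fin.natAdd N₁ i)) (fun i => σ (Fin.natAdd N₁ i)) ≤
      hamHop M (N₁ + N₂) ξ σ := by
  simp only [hamHop, neg_mul, ← neg_add]
  rw [neg_le_neg_iff, mul_sum, mul_sum, mul_sum, ← sum_add_distrib]
  have hconvex : ConvexOn ℝ Set.univ fun x : ℝ => x ^ 2 := even_two.convexOn_pow
  refine sum_le_sum fun μ _ => ?_
  rw [overlap_add, Nat.cast_add]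
  exact add_mul_div_add_le_of_convexOn hconvex N₁.cast_nonneg N₂.cast_nonneg
    (Set.mem_univ _) (Set.mem_univ _)

theorem hamHop_nonpos (ξ : Fin M → Fin N → Bool) (σ : Fin N → Bool) : hamHop M N ξ σ ≤ 0 := by
  rw [hamHop, neg_mul, neg_nonpos]
  positivity

end Hamiltonian

section FreeEnergy

/-- The logarithm `log Z_N(ξ)` of the Hopfield partition function: the extensive free energy
`N α_N(ξ)`, kept without the factor `1 / N` because it is this quantity that is subadditive. -/
noncomputable def logPartition (β : ℝ) (M N : ℕ) (ξ : Fin M → Fin N → Bool) : ℝ :=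
  Real.log (∑ σ : Fin N → Bool, Real.exp (-β * hamHop M N ξ σ))

/-- The quenched extensive free energy `E[log Z_N]`. For i.i.d. symmetric Bernoulli patterns, the
expectation is the uniform average over all `2 ^ (M * N)` realizations. -/
noncomputable def quenchedLogPartition (β : ℝ) (M N : ℕ) : ℝ :=
  𝔼 ξ : Fin M → Fin N → Bool, logPartition β M N ξ

/-- Splits a family of words of length `N₁ + N₂` into the families of their first `N₁` and last
`N₂` letters; for patterns, this is the decomposition of the sites into two blocks. -/
def blockSplit (ι α : Type*) (N₁ N₂ : ℕ) :
    (ι → Fin (N₁ + N₂) → α) ≃ (ι → Fin N₁ → α) × (ι → Fin N₂ → α) :=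
  (Equiv.piCongrRight fun _ => (Fin.appendEquiv N₁ N₂).symm).trans
    (Equiv.arrowProdEquivProdArrow ι _ _)

variable {β : ℝ}

theorem alphaHop_eq_logPartition_div (β : ℝ) (M N : ℕ) (ξ : Fin M → Fin N → Bool) :
    alphaHop β M N ξ = logPartition β M N ξ / N :=
  one_div_mul_eq_div _ _

theorem natCast_mul_alphaHop (β : ℝ) (M N : ℕ) (ξ : Fin M → Fin N → Bool) :
    (N : ℝ) * alphaHop β M N ξ = logPartition β M N ξ := by
  obtain rfl | hN := N.eq_zero_or_pos
  · simp [logPartition, hamHop]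
  · rw [alphaHop_eq_logPartition_div]
    field_simp

theorem logPartition_nonneg (hβ : 0 ≤ β) (M N : ℕ) (ξ : Fin M → Fin N → Bool) :
    0 ≤ logPartition β M N ξ := by
  refine le_trans ?_ (le_log_sum_exp (fun σ => -β * hamHop M N ξ σ) fun _ => true)
  exact mul_nonneg_of_nonpos_of_nonpos (neg_nonpos.2 hβ) (hamHop_nonpos ξ _)

theorem logPartition_add_le (hβ : 0 ≤ β) {M N₁ N₂ : ℕ} (ξ : Fin M → Fin (N₁ + N₂) → Bool) :
    logPartition β M (N₁ + N₂) ξ ≤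
      logPartition β M N₁ (fun μ i => ξ μ (Fin.castAdd N₂ i)) +
        logPartition β M N₂ (fun μ i => ξ μ (Fin.natAdd N₁ i)) := by
  refine log_sum_exp_le_add (Fin.appendEquiv N₁ N₂).symm fun σ => ?_
  rw [← mul_add]
  exact mul_le_mul_of_nonpos_left (hamHop_add_le ξ σ) (neg_nonpos.2 hβ)

theorem quenchedLogPartition_nonneg (hβ : 0 ≤ β) (M N : ℕ) : 0 ≤ quenchedLogPartition β M N :=
  expect_nonneg fun ξ _ => logPartition_nonneg hβ M N ξ

theorem subadditive_quenchedLogPartition (hβ : 0 ≤ β) (M : ℕ) :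
    Subadditive (quenchedLogPartition β M) := fun N₁ N₂ =>
  expect_le_expect_add_expect (blockSplit (Fin M) Bool N₁ N₂) fun ξ => logPartition_add_le hβ ξ

theorem tendsto_quenchedLogPartition_div (hβ : 0 ≤ β) (M : ℕ) :
    Tendsto (fun N => quenchedLogPartition β M N / N) atTop
      (nhds (subadditive_quenchedLogPartition hβ M).lim) := by
  refine (subadditive_quenchedLogPartition hβ M).tendsto_lim ⟨0, ?_⟩
  rintro _ ⟨N, rfl⟩
  exact div_nonneg (quenchedLogPartition_nonneg hβ M N) N.cast_nonneg

theorem sum_alphaHop_div_eq (β : ℝ) (M N : ℕ) :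
    (∑ ξ : Fin M → Fin N → Bool, alphaHop β M N ξ) / (2 : ℝ) ^ (M * N) =
      quenchedLogPartition β M N / N := by
  have hcard : (Fintype.card (Fin M → Fin N → Bool) : ℝ) = 2 ^ (M * N) := by
    simp [← pow_mul, mul_comm]
  simp only [alphaHop_eq_logPartition_div]
  rw [← hcard, ← Fintype.expect_eq_sum_div_card, ← expect_div, quenchedLogPartition]

end FreeEnergy

/-- the Hopfield free energy is subadditive pointwise in the patterns, and the
quenched (pattern-averaged) free energy density converges. -/
theorem hopfield_limit (β : ℝ) (hβ : 0 < β) (M : ℕ) (hM : 1 ≤ M) :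
    (∀ N₁ N₂ : ℕ, 1 ≤ N₁ → 1 ≤ N₂ → ∀ ξ : Fin M → Fin (N₁ + N₂) → Bool,
      ((N₁ + N₂ : ℝ)) * alphaHop β M (N₁ + N₂) ξ ≤
        (N₁ : ℝ) * alphaHop β M N₁ (fun μ i => ξ μ (Fin.castAdd N₂ i))
        + (N₂ : ℝ) * alphaHop β M N₂ (fun μ i => ξ μ (Fin.natAdd N₁ i))) ∧
    ∃ L : ℝ, Tendsto (fun N : ℕ =>
        (∑ ξ : Fin M → Fin N → Bool, alphaHop β M N ξ) / (2 : ℝ) ^ (M * N))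
      atTop (nhds L) := by
  refine ⟨fun N₁ N₂ _ _ ξ => ?_, (subadditive_quenchedLogPartition hβ.le M).lim, ?_⟩
  · rw [← Nat.cast_add]
    simp only [natCast_mul_alphaHop]
    exact logPartition_add_le hβ.le ξ
  · simp only [sum_alphaHop_div_eq]
    exact tendsto_quenchedLogPartition_div hβ.le M
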